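/- For every 0 < t₁ < t₂ < d and every ε > 0, there exists a perfectly balanced NCIFS Φ in ℝ^d (all maps at each level are affine similarities with the same contraction ratio) with limsup_{n→∞} (1/n) log #I^(n) ≤ ε such that HD(J(Φ)) = t₁ while B(Φ) = t₂. In particular, Bowen's formula can fail for systems of arbitrarily small exponential growth. -/

import Mathlib

open Metric Set Filter Topology MeasureTheory
open scoped ENNReal

noncomputable section

/-- A non-autonomous conformal iterated function system (NCIFS) on a compact subset `X` of
`ℝ^d`, encoded via the composed maps `wMap m n ω` associated with finite words `ω` occupying
levels `m, m+1, …, n-1`, together with their conformal derivative norms `segN m n ω = ‖Dφ_ω‖`.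
The fields record the standing assumptions: the open set condition, bounded distortion with
constant `K` (both for derivative norms of split words and as two-sided Lipschitz bounds),
and uniform contraction with constant `η < 1`. -/
structure NCIFS (d : ℕ) where
  X : Set (EuclideanSpace ℝ (Fin d))
  hX_compact : IsCompact X
  hX_nonempty : X.Nonempty
  hX_regular : closure (interior X) = X
  hX_convex : Convex ℝ X
  I : ℕ → Type
  hI_ne : ∀ n, Nonempty (I n)
  K : ℝ
  hK : 1 ≤ K
  η : ℝ
  hη_pos : 0 < η
  hη_lt : η < 1
  /-- `segN m n ω` is the derivative norm `‖Dφ_ω‖` of the word `ω` on levels `m, …, n-1`. -/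
  segN : (m n : ℕ) → ((j : Finset.Ico m n) → I j) → ℝ
  segN_pos : ∀ m n ω, 0 < segN m n ω
  /-- uniform contraction -/
  segN_contract : ∀ m n ω, segN m n ω ≤ η ^ (n - m)
  /-- submultiplicativity and bounded distortion for derivative norms of split words -/
  segN_split : ∀ m k n, m ≤ k → k ≤ n →
      ∀ (ω : (j : Finset.Ico m n) → I j) (ω₁ : (j : Finset.Ico m k) → I j)
        (ω₂ : (j : Finset.Ico k n) → I j),
        (∀ (j : ℕ) (h₁ : j ∈ Finset.Ico m k) (h₂ : j ∈ Finset.Ico m n),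
            ω₁ ⟨j, h₁⟩ = ω ⟨j, h₂⟩) →
        (∀ (j : ℕ) (h₁ : j ∈ Finset.Ico k n) (h₂ : j ∈ Finset.Ico m n),
            ω₂ ⟨j, h₁⟩ = ω ⟨j, h₂⟩) →
        segN m n ω ≤ segN m k ω₁ * segN k n ω₂ ∧
          segN m k ω₁ * segN k n ω₂ ≤ K * segN m n ω
  /-- the conformal contraction associated to the word `ω` on levels `m, …, n-1` -/
  wMap : (m n : ℕ) → ((j : Finset.Ico m n) → I j) →
      EuclideanSpace ℝ (Fin d) → EuclideanSpace ℝ (Fin d)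
  wMap_id : ∀ m (ω : (j : Finset.Ico m m) → I j) x, wMap m m ω x = x
  wMap_mapsTo : ∀ m n ω, MapsTo (wMap m n ω) X X
  /-- upper conformal bound: `φ_ω` is `‖Dφ_ω‖`-Lipschitz on `X` -/
  wMap_lip : ∀ m n ω, ∀ x ∈ X, ∀ y ∈ X,
      dist (wMap m n ω x) (wMap m n ω y) ≤ segN m n ω * dist x y
  /-- lower conformal bound (bounded distortion) -/
  wMap_colip : ∀ m n ω, ∀ x ∈ X, ∀ y ∈ X,
      segN m n ω / K * dist x y ≤ dist (wMap m n ω x) (wMap m n ω y)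
  /-- compatibility of the maps under splitting of words -/
  wMap_comp : ∀ m k n, m ≤ k → k ≤ n →
      ∀ (ω : (j : Finset.Ico m n) → I j) (ω₁ : (j : Finset.Ico m k) → I j)
        (ω₂ : (j : Finset.Ico k n) → I j),
        (∀ (j : ℕ) (h₁ : j ∈ Finset.Ico m k) (h₂ : j ∈ Finset.Ico m n),
            ω₁ ⟨j, h₁⟩ = ω ⟨j, h₂⟩) →
        (∀ (j : ℕ) (h₁ : j ∈ Finset.Ico k n) (h₂ : j ∈ Finset.Ico m n),
            ω₂ ⟨j, h₁⟩ = ω ⟨j, h₂⟩) →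
        ∀ x ∈ X, wMap m n ω x = wMap m k ω₁ (wMap k n ω₂ x)
  /-- the open set condition -/
  osc : ∀ n (a b : (j : Finset.Ico n (n+1)) → I j), a ≠ b →
      Disjoint (wMap n (n+1) a '' interior X) (wMap n (n+1) b '' interior X)

namespace NCIFS

variable {d : ℕ} (Φ : NCIFS d)

/-- Words occupying levels `m, …, n-1`. -/
abbrev Word (m n : ℕ) := (j : Finset.Ico m n) → Φ.I j

instance (m n : ℕ) : Nonempty (Φ.Word m n) :=
  ⟨fun j => Classical.choice (Φ.hI_ne j)⟩

/-- The one-letter word at level `n` given by the index `i`. -/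
def single (n : ℕ) (i : Φ.I n) : Φ.Word n (n+1) :=
  fun j => cast (congrArg Φ.I (show n = (j : ℕ) by
    have := Finset.mem_Ico.mp j.2; omega)) i

/-- `‖Dφ_i^{(n)}‖`, the derivative norm of the single map with index `i` at level `n`. -/
def Dnorm (n : ℕ) (i : Φ.I n) : ℝ := Φ.segN n (n+1) (Φ.single n i)

/-- The partition function `Z_n(t) = Σ_{ω ∈ I^n} ‖Dφ_ω‖^t`, valued in `[0,∞]`. -/
def Z (n : ℕ) (t : ℝ) : ℝ≥0∞ := ∑' ω : Φ.Word 0 n, ENNReal.ofReal (Φ.segN 0 n ω ^ t)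

/-- The lower pressure `P̲(t) = liminf (1/n) log Z_n(t)`, valued in `[-∞,∞]`. -/
def lowP (t : ℝ) : EReal :=
  liminf (fun n : ℕ => (Φ.Z n t).log * (((n : ℝ)⁻¹ : ℝ) : EReal)) atTop

/-- The upper pressure `P̄(t) = limsup (1/n) log Z_n(t)`. -/
def upP (t : ℝ) : EReal :=
  limsup (fun n : ℕ => (Φ.Z n t).log * (((n : ℝ)⁻¹ : ℝ) : EReal)) atTop

/-- The Bowen dimension `B(Φ) = sup {t ≥ 0 : P̲(t) > 0}` (and `0` if there is no such `t`). -/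
def Bdim : ℝ≥0∞ := ⨆ t : {t : ℝ // 0 ≤ t ∧ (0 : EReal) < Φ.lowP t}, ENNReal.ofReal t.1

/-- The limit set `J(Φ) = ⋂_n ⋃_{ω ∈ I^n} φ_ω(X)`. -/
def limitSet : Set (EuclideanSpace ℝ (Fin d)) :=
  ⋂ n, ⋃ ω : Φ.Word 0 n, Φ.wMap 0 n ω '' Φ.X

/-- The minimal derivative norm `c̲_n` at level `n`. -/
def cmin (n : ℕ) : ℝ := ⨅ i : Φ.I n, Φ.Dnorm n i

/-- The maximal derivative norm `c̄_n` at level `n`. -/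
def cmax (n : ℕ) : ℝ := ⨆ i : Φ.I n, Φ.Dnorm n i

/-- `ρ_n`, the maximal ratio of derivative norms at level `n`. -/
def ρ (n : ℕ) : ℝ := Φ.cmax n / Φ.cmin n

/-- The modified partition function
`Z̃_n(t) = Z_{n-1}(t) · (#I^{(n)})^{t/d} · c̲_n^t`. -/
def Zt (n : ℕ) (t : ℝ) : ℝ≥0∞ :=
  Φ.Z (n - 1) t * ENNReal.ofReal ((Nat.card (Φ.I n) : ℝ) ^ (t / (d : ℝ)) * Φ.cmin n ^ t)

/-- `P̃(t) = liminf (1/n) log Z̃_n(t)`. -/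
def tP (t : ℝ) : EReal :=
  liminf (fun n : ℕ => (Φ.Zt n t).log * (((n : ℝ)⁻¹ : ℝ) : EReal)) atTop

end NCIFS

namespace NCIFSaux

/-- Parameters of a homogeneous grid system: `m j ^ d` maps of ratio `c j` at level `j`. -/
structure Par where
  m : ℕ → ℕ
  c : ℕ → ℝ
  η : ℝ
  hm : ∀ j, 0 < m j
  hc : ∀ j, 0 < c j
  hη : η < 1
  hη0 : 0 < η
  hcm : ∀ j, c j * m j ≤ η

variable (p : Par)

def pr (a b : ℕ) : ℝ := ∏ l ∈ Finset.Ico a b, p.c l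

def off (e : ℕ → ℕ) (a b : ℕ) : ℝ := ∑ j ∈ Finset.Ico a b, pr p a (j + 1) * (e j : ℝ)

lemma c_le (j : ℕ) : p.c j ≤ p.η := by
  have h1 := p.hcm j
  have h2 := p.hc j
  have h3 : (1 : ℝ) ≤ p.m j := by exact_mod_cast p.hm j
  nlinarith

lemma pr_pos (a b : ℕ) : 0 < pr p a b := Finset.prod_pos fun j _ => p.hc j

lemma pr_split {a k b : ℕ} (h1 : a ≤ k) (h2 : k ≤ b) : pr p a k * pr p k b = pr p a b :=
  Finset.prod_Ico_consecutive _ h1 h2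

lemma pr_succ {a b : ℕ} (h : a ≤ b) : pr p a (b + 1) = pr p a b * p.c b :=
  Finset.prod_Ico_succ_top h _

lemma pr_self (a : ℕ) : pr p a a = 1 := by simp [pr]

lemma pr_le (a b : ℕ) : pr p a b ≤ p.η ^ (b - a) := by
  unfold pr
  calc _ ≤ ∏ l ∈ Finset.Ico a b, p.η :=
        Finset.prod_le_prod (fun j _ => (p.hc j).le) (fun j _ => c_le p j)
    _ = _ := by simp

lemma off_split (e : ℕ → ℕ) {a k b : ℕ} (h1 : a ≤ k) (h2 : k ≤ b) :
    off p e a b = off p e a k + pr p a k * off p e k b := by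
  unfold off
  rw [← Finset.sum_Ico_consecutive _ h1 h2, Finset.mul_sum]
  congr 1
  refine Finset.sum_congr rfl fun j hj => ?_
  rw [Finset.mem_Ico] at hj
  rw [← pr_split p h1 (show k ≤ j + 1 by omega)]
  ring

lemma off_congr {e e' : ℕ → ℕ} {a b : ℕ} (h : ∀ j ∈ Finset.Ico a b, e j = e' j) :
    off p e a b = off p e' a b :=
  Finset.sum_congr rfl fun j hj => by rw [h j hj]

lemma off_succ (e : ℕ → ℕ) {a b : ℕ} (h : a ≤ b) :
    off p e a (b + 1) = off p e a b + pr p a (b + 1) * e b :=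
  Finset.sum_Ico_succ_top h _

lemma off_nonneg (e : ℕ → ℕ) (a b : ℕ) : 0 ≤ off p e a b :=
  Finset.sum_nonneg fun j _ => mul_nonneg (pr_pos p _ _).le (Nat.cast_nonneg _)

lemma off_step (e : ℕ → ℕ) (he : ∀ j, e j < p.m j) {a b : ℕ} (h : a ≤ b) :
    off p e a (b + 1) + pr p a (b + 1) ≤ off p e a b + pr p a b * (p.c b * p.m b) := by
  rw [off_succ p e h, pr_succ p h]
  have h1 : (e b : ℝ) + 1 ≤ p.m b := by exact_mod_cast he b
  have := mul_le_mul_of_nonneg_left h1 (mul_pos (pr_pos p a b) (p.hc b)).le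
  nlinarith

lemma off_step' (e : ℕ → ℕ) (he : ∀ j, e j < p.m j) {a b : ℕ} (h : a ≤ b) :
    off p e a (b + 1) + pr p a (b + 1) ≤ off p e a b + pr p a b * p.η := by
  have := off_step p e he h
  have := mul_le_mul_of_nonneg_left (p.hcm b) (pr_pos p a b).le
  linarith

lemma off_anti (e : ℕ → ℕ) (he : ∀ j, e j < p.m j) {a k b : ℕ} (h : a ≤ k) (hk : k ≤ b) :
    off p e a b + pr p a b ≤ off p e a k + pr p a k := by
  induction b, hk using Nat.le_induction with
  | base => exact le_rfl
  | succ b hb ih =>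
    have := off_step' p e he (h.trans hb)
    have := pr_pos p a b
    have := p.hη
    nlinarith

lemma off_mono (e : ℕ → ℕ) {a k b : ℕ} (h : a ≤ k) (hk : k ≤ b) :
    off p e a k ≤ off p e a b := by
  rw [off_split p e h hk]
  have := mul_nonneg (pr_pos p a k).le (off_nonneg p e k b)
  linarith

lemma off_bound (e : ℕ → ℕ) (he : ∀ j, e j < p.m j) (a b : ℕ) :
    off p e a b + pr p a b ≤ 1 := by
  rcases le_total a b with h | h
  · have := off_anti p e he le_rfl h
    simpa [off, pr] using this
  · simp [off, pr, Finset.Ico_eq_empty_of_le h]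

/-- the closed unit cube -/
def cubeX (d : ℕ) : Set (EuclideanSpace ℝ (Fin d)) := {x | ∀ k, x k ∈ Icc (0 : ℝ) 1}

lemma cubeX_eq (d : ℕ) : cubeX d =
    (EuclideanSpace.equiv (Fin d) ℝ).toHomeomorph ⁻¹' (Set.univ.pi fun _ => Icc (0 : ℝ) 1) := by
  ext x
  simp only [cubeX, Set.mem_preimage, Set.mem_univ_pi]
  rfl

lemma interior_cubeX (d : ℕ) : interior (cubeX d) = {x | ∀ k, x k ∈ Ioo (0 : ℝ) 1} := by
  rw [cubeX_eq, ← Homeomorph.preimage_interior, interior_pi_set Set.finite_univ]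
  ext x; simp [Set.mem_pi]

lemma cubeX_compact (d : ℕ) : IsCompact (cubeX d) := by
  rw [cubeX_eq, Homeomorph.isCompact_preimage]
  exact isCompact_univ_pi fun _ => isCompact_Icc

lemma cubeX_convex (d : ℕ) : Convex ℝ (cubeX d) := by
  intro x hx y hy a b ha hb hab k
  have := convex_Icc (0 : ℝ) 1 (hx k) (hy k) ha hb hab
  simpa using this

lemma interior_cubeX_nonempty (d : ℕ) : (interior (cubeX d)).Nonempty := by
  rw [interior_cubeX]
  exact ⟨WithLp.toLp 2 (fun _ => 1 / 2), fun k => by norm_num⟩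

/-- extension of the `k`-th coordinate of a word by `0`. -/
def ext {d : ℕ} {a b : ℕ} (ω : (j : Finset.Ico a b) → (Fin d → Fin (p.m j))) (k : Fin d)
    (j : ℕ) : ℕ :=
  if h : j ∈ Finset.Ico a b then (ω ⟨j, h⟩ k : ℕ) else 0

lemma ext_lt {d : ℕ} {a b : ℕ} (ω : (j : Finset.Ico a b) → (Fin d → Fin (p.m j))) (k : Fin d)
    (j : ℕ) : ext p ω k j < p.m j := by
  unfold ext
  split_ifs with h
  · exact (ω ⟨j, h⟩ k).2
  · exact p.hm j

def wm {d : ℕ} (a b : ℕ) (ω : (j : Finset.Ico a b) → (Fin d → Fin (p.m j)))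
    (x : EuclideanSpace ℝ (Fin d)) : EuclideanSpace ℝ (Fin d) :=
  pr p a b • x + WithLp.toLp 2 (fun k => off p (ext p ω k) a b)

lemma wm_apply {d : ℕ} (a b : ℕ) (ω : (j : Finset.Ico a b) → (Fin d → Fin (p.m j)))
    (x : EuclideanSpace ℝ (Fin d)) (k : Fin d) :
    wm p a b ω x k = pr p a b * x k + off p (ext p ω k) a b := by
  simp [wm]

lemma wm_dist {d : ℕ} (a b : ℕ) (ω : (j : Finset.Ico a b) → (Fin d → Fin (p.m j)))
    (x y : EuclideanSpace ℝ (Fin d)) :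
    dist (wm p a b ω x) (wm p a b ω y) = pr p a b * dist x y := by
  unfold wm
  rw [dist_add_right, dist_smul₀, Real.norm_of_nonneg (pr_pos p a b).le]

def sys (d : ℕ) : NCIFS d where
  X := cubeX d
  hX_compact := cubeX_compact d
  hX_nonempty := (interior_cubeX_nonempty d).mono interior_subset
  hX_regular := by
    rw [(cubeX_convex d).closure_interior_eq_closure_of_nonempty_interior
      (interior_cubeX_nonempty d), (cubeX_compact d).isClosed.closure_eq]
  hX_convex := cubeX_convex d
  I := fun j => Fin d → Fin (p.m j)
  hI_ne := fun j => ⟨fun _ => ⟨0, p.hm j⟩⟩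
  K := 1
  hK := le_rfl
  η := p.η
  hη_pos := p.hη0
  hη_lt := p.hη
  segN := fun a b _ => pr p a b
  segN_pos := fun a b _ => pr_pos p a b
  segN_contract := fun a b _ => pr_le p a b
  segN_split := fun a k b h1 h2 _ _ _ _ _ => by
    rw [pr_split p h1 h2, one_mul]; exact ⟨le_rfl, le_rfl⟩
  wMap := wm p
  wMap_id := fun a ω x => by
    ext k
    rw [wm_apply]
    simp [pr, off]
  wMap_mapsTo := fun a b ω x hx k => by
    rw [wm_apply]
    have h1 := off_bound p (ext p ω k) (ext_lt p ω k) a b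
    have h2 := off_nonneg p (ext p ω k) a b
    have h3 := pr_pos p a b
    have h4 := hx k
    exact ⟨by nlinarith [h4.1], by nlinarith [h4.2]⟩
  wMap_lip := fun a b ω x _ y _ => (wm_dist p a b ω x y).le
  wMap_colip := fun a b ω x _ y _ => by rw [wm_dist, div_one]
  wMap_comp := fun a k b h1 h2 ω ω₁ ω₂ e1 e2 x _ => by
    ext i
    rw [wm_apply, wm_apply, wm_apply, off_split p _ h1 h2, ← pr_split p h1 h2]
    have E1 : off p (ext p ω i) a k = off p (ext p ω₁ i) a k := by
      refine off_congr p fun j hj => ?_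
      have hj' : j ∈ Finset.Ico a b := by
        rw [Finset.mem_Ico] at hj ⊢; omega
      rw [ext, ext, dif_pos hj, dif_pos hj', e1 j hj hj']
    have E2 : off p (ext p ω i) k b = off p (ext p ω₂ i) k b := by
      refine off_congr p fun j hj => ?_
      have hj' : j ∈ Finset.Ico a b := by
        rw [Finset.mem_Ico] at hj ⊢; omega
      rw [ext, ext, dif_pos hj, dif_pos hj', e2 j hj hj']
    rw [E1, E2]
    ring
  osc := fun n a b hab => by
    rw [Set.disjoint_left]
    rintro _ ⟨x, hx, rfl⟩ ⟨y, hy, hxy⟩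
    apply hab
    rw [interior_cubeX] at hx hy
    funext ⟨j, hj⟩
    have hj' : j = n := by rw [Finset.mem_Ico] at hj; omega
    subst hj'
    funext k
    have := congrArg (fun z : EuclideanSpace ℝ (Fin d) => z k) hxy
    simp only [wm_apply] at this
    rw [off_succ p _ le_rfl, off_succ p _ le_rfl, ext, ext, dif_pos hj, dif_pos hj] at this
    simp only [off, Finset.Ico_self, Finset.sum_empty, zero_add] at this
    have hp := pr_pos p j (j + 1)
    have h2 : y k + ((b ⟨j, hj⟩ k : ℕ) : ℝ) = x k + ((a ⟨j, hj⟩ k : ℕ) : ℝ) := by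
      apply mul_left_cancel₀ hp.ne'
      linarith
    have hx' := hx k
    have hy' := hy k
    apply Fin.ext
    have l1 : ((a ⟨j, hj⟩ k : ℕ) : ℝ) < ((b ⟨j, hj⟩ k : ℕ) : ℝ) + 1 := by
      linarith [hx'.1, hy'.2]
    have l2 : ((b ⟨j, hj⟩ k : ℕ) : ℝ) < ((a ⟨j, hj⟩ k : ℕ) : ℝ) + 1 := by
      linarith [hx'.2, hy'.1]
    have l1' : (a ⟨j, hj⟩ k : ℕ) < (b ⟨j, hj⟩ k : ℕ) + 1 := by exact_mod_cast l1
    have l2' : (b ⟨j, hj⟩ k : ℕ) < (a ⟨j, hj⟩ k : ℕ) + 1 := by exact_mod_cast l2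
    omega

/-- number of subdivisions (per coordinate) before level `n` -/
def PP (n : ℕ) : ℕ := ∏ l ∈ Finset.range n, p.m l

lemma PP_pos (n : ℕ) : 0 < PP p n := Finset.prod_pos fun j _ => p.hm j

lemma PP_succ (n : ℕ) : PP p (n + 1) = PP p n * p.m n := Finset.prod_range_succ _ _

def FF (y : ℝ) (n : ℕ) : ℕ := ⌊y * PP p n⌋₊

def dg (y : ℝ) (j : ℕ) : ℕ := FF p y (j + 1) % p.m j

lemma dg_lt (y : ℝ) (j : ℕ) : dg p y j < p.m j := Nat.mod_lt _ (p.hm j)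

lemma FF_succ (y : ℝ) (j : ℕ) : FF p y (j + 1) = p.m j * FF p y j + dg p y j := by
  have h : FF p y j = FF p y (j + 1) / p.m j := by
    unfold FF
    rw [← Nat.floor_div_natCast, PP_succ]
    congr 1
    have : (p.m j : ℝ) ≠ 0 := by exact_mod_cast (p.hm j).ne'
    push_cast
    field_simp
  rw [h]
  exact (Nat.div_add_mod _ _).symm

lemma FF_zero {y : ℝ} (hy : y ∈ Ico (0 : ℝ) 1) : FF p y 0 = 0 := by
  simp [FF, PP, hy.2]

def hh (y : ℝ) : ℝ := ⨆ n, off p (dg p y) 0 n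

lemma hh_bdd (y : ℝ) : BddAbove (Set.range fun n => off p (dg p y) 0 n) := by
  refine ⟨1, ?_⟩
  rintro _ ⟨n, rfl⟩
  have := off_bound p (dg p y) (dg_lt p y) 0 n
  have := pr_pos p 0 n
  simp only
  linarith

lemma le_hh (y : ℝ) (n : ℕ) : off p (dg p y) 0 n ≤ hh p y := le_ciSup (hh_bdd p y) n

lemma hh_le (y : ℝ) (n : ℕ) : hh p y ≤ off p (dg p y) 0 n + pr p 0 n * p.η := by
  refine ciSup_le fun k => ?_
  have h1 := off_step' p (dg p y) (dg_lt p y) (Nat.zero_le n)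
  rcases le_total k (n + 1) with h | h
  · have := off_mono p (dg p y) (Nat.zero_le k) h
    have := pr_pos p 0 (n + 1)
    linarith
  · have := off_anti p (dg p y) (dg_lt p y) (Nat.zero_le (n + 1)) h
    have := pr_pos p 0 k
    linarith

lemma oneD (hP : ∀ x : ℝ, ∃ n, x < PP p n) {y y' : ℝ} (hy : y ∈ Ico (0 : ℝ) 1)
    (hy' : y' ∈ Ico (0 : ℝ) 1) (hlt : y < y') :
    ∃ j v : ℕ, 1 ≤ v ∧ v < p.m j ∧ y' - y ≤ 2 * v / PP p (j + 1) ∧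
      (1 - p.η) * (pr p 0 (j + 1) * v) ≤ hh p y' - hh p y := by
  classical
  have hex : ∃ n, FF p y n ≠ FF p y' n := by
    obtain ⟨n, hn⟩ := hP (1 / (y' - y))
    refine ⟨n, ?_⟩
    have h0 : 0 < y' - y := sub_pos.2 hlt
    rw [div_lt_iff₀ h0] at hn
    intro hF
    have h1 : y' * PP p n < FF p y' n + 1 := Nat.lt_floor_add_one _
    have h2 : (FF p y n : ℝ) ≤ y * PP p n :=
      Nat.floor_le (mul_nonneg hy.1 (Nat.cast_nonneg _))
    rw [hF] at h2
    nlinarith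
  obtain ⟨j, hj⟩ : ∃ j, Nat.find hex = j + 1 := by
    apply Nat.exists_eq_succ_of_ne_zero
    intro h
    have := Nat.find_spec hex
    rw [h, FF_zero p hy, FF_zero p hy'] at this
    exact this rfl
  have hne : FF p y (j + 1) ≠ FF p y' (j + 1) := hj ▸ Nat.find_spec hex
  have heq : ∀ l ≤ j, FF p y l = FF p y' l := fun l hl => by
    have := Nat.find_min hex (show l < Nat.find hex by omega)
    exact not_not.1 this
  have hle : FF p y (j + 1) ≤ FF p y' (j + 1) :=
    Nat.floor_le_floor (mul_le_mul_of_nonneg_right hlt.le (Nat.cast_nonneg _))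
  have e1 := FF_succ p y j
  have e2 := FF_succ p y' j
  have e3 := heq j le_rfl
  have e4 := dg_lt p y' j
  rw [e3] at e1
  have hd : ∀ l ∈ Finset.Ico 0 j, dg p y l = dg p y' l := fun l hl => by
    rw [Finset.mem_Ico] at hl
    unfold dg
    rw [heq (l + 1) (by omega)]
  obtain ⟨v, hv⟩ : ∃ v, dg p y' j = dg p y j + v := Nat.exists_eq_add_of_le (by omega)
  have hv1 : 1 ≤ v := by
    rcases Nat.eq_zero_or_pos v with h | h
    · exfalso; apply hne; rw [e1, e2, hv, h]; rfl
    · exact h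
  have hv1' : (1 : ℝ) ≤ v := by exact_mod_cast hv1
  refine ⟨j, v, hv1, by omega, ?_, ?_⟩
  · have hp : (0 : ℝ) < PP p (j + 1) := by exact_mod_cast PP_pos p (j + 1)
    rw [le_div_iff₀ hp]
    have h1 : y' * PP p (j + 1) < FF p y' (j + 1) + 1 := Nat.lt_floor_add_one _
    have h2 : (FF p y (j + 1) : ℝ) ≤ y * PP p (j + 1) :=
      Nat.floor_le (mul_nonneg hy.1 (Nat.cast_nonneg _))
    have h3 : (FF p y' (j + 1) : ℝ) = FF p y (j + 1) + v := by
      rw [e1, e2, hv]; push_cast; ring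
    nlinarith
  · have h1 := le_hh p y' (j + 1)
    have h2 := hh_le p y (j + 1)
    rw [off_succ p _ (Nat.zero_le j)] at h1 h2
    rw [off_congr p hd] at h2
    rw [hv] at h1
    push_cast at h1
    have hp := pr_pos p 0 (j + 1)
    have : pr p 0 (j + 1) * p.η * 1 ≤ pr p 0 (j + 1) * p.η * v :=
      mul_le_mul_of_nonneg_left hv1' (mul_pos hp p.hη0).le
    nlinarith

lemma oneD_holder (hP : ∀ x : ℝ, ∃ n, x < PP p n) {α C : ℝ} (hα : 0 < α) (hα1 : α ≤ 1)
    (hC : 0 ≤ C)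
    (key : ∀ j, 1 < p.m j → 1 / (PP p j : ℝ) ≤ C * (pr p 0 j * (p.c j * p.m j)) ^ α)
    {y y' : ℝ} (hy : y ∈ Ico (0 : ℝ) 1) (hy' : y' ∈ Ico (0 : ℝ) 1) :
    |y' - y| ≤ 2 * C / (1 - p.η) ^ α * |hh p y' - hh p y| ^ α := by
  wlog hlt : y < y' generalizing y y'
  · rcases (not_lt.1 hlt).lt_or_eq with h | h
    · have := this hy' hy h
      rwa [abs_sub_comm y y', abs_sub_comm (hh p y)] at this
    · subst h
      simp [Real.zero_rpow hα.ne']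
  obtain ⟨j, v, hv1, hvm, h1, h2⟩ := oneD p hP hy hy' hlt
  have hη : 0 < 1 - p.η := sub_pos.2 p.hη
  have hpr := pr_pos p 0 (j + 1)
  have hv0 : (0 : ℝ) < v := by exact_mod_cast hv1
  have hm0 : (0 : ℝ) < p.m j := by exact_mod_cast p.hm j
  have hPj : (0 : ℝ) < PP p j := by exact_mod_cast PP_pos p j
  have hk := key j (by omega)
  rw [abs_of_pos (sub_pos.2 hlt)]
  have hu : (v : ℝ) / p.m j ≤ 1 := by
    rw [div_le_one hm0]; exact_mod_cast hvm.le
  have hu0 : 0 < (v : ℝ) / p.m j := div_pos hv0 hm0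
  have hu2 : (v : ℝ) / p.m j ≤ ((v : ℝ) / p.m j) ^ α :=
    Real.self_le_rpow_of_le_one hu0.le hu hα1
  have hS : 0 < pr p 0 j * (p.c j * p.m j) :=
    mul_pos (pr_pos p 0 j) (mul_pos (p.hc j) hm0)
  calc y' - y ≤ 2 * v / PP p (j + 1) := h1
    _ = 2 * ((v : ℝ) / p.m j * (1 / PP p j)) := by
        rw [PP_succ]; push_cast; field_simp
    _ ≤ 2 * (((v : ℝ) / p.m j) ^ α * (C * (pr p 0 j * (p.c j * p.m j)) ^ α)) := by
        gcongr
    _ = 2 * C * (((v : ℝ) / p.m j) * (pr p 0 j * (p.c j * p.m j))) ^ α := by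
        rw [Real.mul_rpow hu0.le hS.le]; ring
    _ = 2 * C * (pr p 0 (j + 1) * v) ^ α := by
        rw [pr_succ p (Nat.zero_le j)]
        congr 2
        field_simp
    _ = 2 * C / (1 - p.η) ^ α * ((1 - p.η) * (pr p 0 (j + 1) * v)) ^ α := by
        rw [Real.mul_rpow hη.le (by positivity)]
        have := (Real.rpow_pos_of_pos hη α).ne'
        field_simp
    _ ≤ 2 * C / (1 - p.η) ^ α * |hh p y' - hh p y| ^ α := by
        have : 0 < (1 - p.η) ^ α := Real.rpow_pos_of_pos hη α
        gcongr
        exact h2.trans (le_abs_self _)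

def HH {d : ℕ} (y : EuclideanSpace ℝ (Fin d)) : EuclideanSpace ℝ (Fin d) :=
  WithLp.toLp 2 fun k => hh p (y k)

def hcube (d : ℕ) : Set (EuclideanSpace ℝ (Fin d)) := {x | ∀ k, x k ∈ Ico (0 : ℝ) 1}

lemma dist_le_of_coord {d : ℕ} {x y : EuclideanSpace ℝ (Fin d)} {s : ℝ} (hs : 0 ≤ s)
    (h : ∀ k, |x k - y k| ≤ s) : dist x y ≤ √d * s := by
  rw [EuclideanSpace.dist_eq]
  calc √(∑ i, dist (x i) (y i) ^ 2) ≤ √(∑ _i : Fin d, s ^ 2) := by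
        apply Real.sqrt_le_sqrt
        refine Finset.sum_le_sum fun i _ => ?_
        rw [Real.dist_eq]
        exact pow_le_pow_left₀ (abs_nonneg _) (h i) 2
    _ = √d * s := by
        simp [Real.sqrt_sq hs]

lemma coord_le_dist {d : ℕ} (x y : EuclideanSpace ℝ (Fin d)) (k : Fin d) :
    |x k - y k| ≤ dist x y := by
  rw [dist_eq_norm]
  simpa using PiLp.norm_apply_le (x - y) k

lemma HH_mem {d : ℕ} (y : EuclideanSpace ℝ (Fin d)) : HH p y ∈ (sys p d).limitSet := by
  refine Set.mem_iInter.2 fun n => Set.mem_iUnion.2 ?_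
  refine ⟨fun j k => ⟨dg p (y k) j, dg_lt p (y k) j⟩, ?_⟩
  have hp := pr_pos p 0 n
  refine ⟨WithLp.toLp 2 fun k => (hh p (y k) - off p (dg p (y k)) 0 n) / pr p 0 n, ?_, ?_⟩
  · intro k
    have h1 := le_hh p (y k) n
    have h2 := hh_le p (y k) n
    have h3 := p.hη
    simp only [mem_Icc]
    refine ⟨div_nonneg (by linarith) hp.le, ?_⟩
    rw [div_le_one hp]
    nlinarith
  · ext k
    change wm p 0 n _ _ k = _
    rw [wm_apply]
    have : off p (ext p (fun (j : Finset.Ico 0 n) (k : Fin d) =>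
        (⟨dg p (y k) j, dg_lt p (y k) j⟩ : Fin (p.m j))) k) 0 n = off p (dg p (y k)) 0 n := by
      refine off_congr p fun j hj => ?_
      rw [ext, dif_pos hj]
    rw [this]
    simp only [HH]
    field_simp
    ring

lemma dim_lower {d : ℕ} (hd : 0 < d) (hP : ∀ x : ℝ, ∃ n, x < PP p n) {α C : ℝ} (hα : 0 < α)
    (hα1 : α ≤ 1) (hC : 0 ≤ C)
    (key : ∀ j, 1 < p.m j → 1 / (PP p j : ℝ) ≤ C * (pr p 0 j * (p.c j * p.m j)) ^ α) :
    ENNReal.ofReal (α * d) ≤ dimH (sys p d).limitSet := by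
  set D : ℝ := √d * (2 * C / (1 - p.η) ^ α) with hD
  have hη : 0 < 1 - p.η := sub_pos.2 p.hη
  have hD0 : 0 ≤ D := by positivity
  have main : ∀ y ∈ hcube d, ∀ y' ∈ hcube d, dist y y' ≤ D * dist (HH p y) (HH p y') ^ α := by
    intro y hy y' hy'
    rw [hD, mul_assoc]
    apply dist_le_of_coord (by positivity)
    intro k
    refine (oneD_holder p hP hα hα1 hC key (hy' k) (hy k)).trans ?_
    have := coord_le_dist (HH p y) (HH p y') k
    simp only [HH] at this ⊢
    gcongr
  have inj : Set.InjOn (HH p) (hcube d) := by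
    intro y hy y' hy' h
    have := main y hy y' hy'
    rw [h, dist_self, Real.zero_rpow hα.ne', mul_zero] at this
    exact dist_le_zero.1 this
  have hold : HolderOnWith D.toNNReal α.toNNReal (Function.invFunOn (HH p) (hcube d))
      (HH p '' hcube d) := by
    rintro _ ⟨y, hy, rfl⟩ _ ⟨y', hy', rfl⟩
    rw [inj.leftInvOn_invFunOn hy, inj.leftInvOn_invFunOn hy', edist_dist, edist_dist,
      Real.coe_toNNReal _ hα.le, ENNReal.ofReal_rpow_of_nonneg dist_nonneg hα.le]
    change _ ≤ ENNReal.ofReal D * _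
    rw [← ENNReal.ofReal_mul hD0]
    exact ENNReal.ofReal_le_ofReal (main y hy y' hy')
  have h1 := hold.dimH_image_le (Real.toNNReal_pos.2 hα)
  have h2 : Function.invFunOn (HH p) (hcube d) '' (HH p '' hcube d) = hcube d :=
    inj.invFunOn_image Set.Subset.rfl
  have h3 : dimH (hcube d) = d := by
    have : (interior (hcube d)).Nonempty := by
      refine (interior_cubeX_nonempty d).mono ?_
      apply interior_maximal _ isOpen_interior
      rw [interior_cubeX]
      intro x hx k
      exact ⟨(hx k).1.le, (hx k).2⟩
    rw [Real.dimH_of_nonempty_interior this]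
    simp
  rw [h2, h3] at h1
  have h4 : dimH (HH p '' hcube d) ≤ dimH (sys p d).limitSet := by
    apply dimH_mono
    rintro _ ⟨y, _, rfl⟩
    exact HH_mem p y
  refine le_trans ?_ h4
  rw [ENNReal.le_div_iff_mul_le (Or.inl (by simpa using hα)) (Or.inl (by simp))] at h1
  rw [ENNReal.ofReal_mul hα.le, mul_comm, ENNReal.ofReal_natCast]
  exact h1

lemma card_word (d n : ℕ) :
    Fintype.card ((j : Finset.Ico 0 n) → (Fin d → Fin (p.m j))) = PP p n ^ d := by
  rw [Fintype.card_pi]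
  simp only [Fintype.card_fun, Fintype.card_fin]
  rw [Finset.prod_pow]
  congr 1
  unfold PP
  rw [Finset.range_eq_Ico]
  exact Finset.prod_coe_sort (Finset.Ico 0 n) (fun l => p.m l)

lemma Z_eq (d n : ℕ) (t : ℝ) :
    (sys p d).Z n t = ENNReal.ofReal ((PP p n : ℝ) ^ d * pr p 0 n ^ t) := by
  unfold NCIFS.Z
  change ∑' ω : ((j : Finset.Ico 0 n) → (Fin d → Fin (p.m j))), ENNReal.ofReal (pr p 0 n ^ t) = _
  rw [tsum_fintype, Finset.sum_const, Finset.card_univ, card_word, nsmul_eq_mul,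
    ENNReal.ofReal_mul (by positivity), ← Nat.cast_pow, ENNReal.ofReal_natCast]

lemma dim_upper {d : ℕ} {t C : ℝ} (ht : 0 < t) (N : ℕ → ℕ) (hN : Tendsto N atTop atTop)
    (key : ∀ i, (PP p (N i) : ℝ) ^ d * (pr p 0 (N i) * (p.c (N i) * p.m (N i))) ^ t ≤ C) :
    dimH (sys p d).limitSet ≤ ENNReal.ofReal t := by
  set S : ℕ → ℝ := fun n => pr p 0 n * (p.c n * p.m n) with hS
  have hS0 : ∀ n, 0 ≤ S n := fun n =>
    mul_nonneg (pr_pos p 0 n).le (mul_nonneg (p.hc n).le (Nat.cast_nonneg _))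
  have hSle : ∀ n, S n ≤ p.η ^ n := fun n => by
    have h1 := pr_le p 0 n
    have h2 := p.hcm n
    have h3 := p.hη
    have h4 := pr_pos p 0 n
    simp only [hS]
    calc pr p 0 n * (p.c n * p.m n) ≤ pr p 0 n * 1 := by
          apply mul_le_mul_of_nonneg_left _ h4.le; linarith
      _ ≤ p.η ^ n := by simpa using h1
  have hSlim : Tendsto (fun i => S (N i)) atTop (𝓝 0) := by
    have : Tendsto S atTop (𝓝 0) :=
      squeeze_zero hS0 hSle (tendsto_pow_atTop_nhds_zero_of_lt_one p.hη0.le p.hη)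
    exact this.comp hN
  let T : (i : ℕ) → ((j : Finset.Ico 0 (N i)) → (Fin d → Fin (p.m j))) →
      Set (EuclideanSpace ℝ (Fin d)) := fun i u =>
    {z | ∀ k, z k ∈ Icc (off p (ext p u k) 0 (N i)) (off p (ext p u k) 0 (N i) + S (N i))}
  have hdiam : ∀ i u, Metric.ediam (T i u) ≤ ENNReal.ofReal (√d * S (N i)) := by
    intro i u
    refine Metric.ediam_le fun x hx y hy => ?_
    rw [edist_dist]
    apply ENNReal.ofReal_le_ofReal
    apply dist_le_of_coord (hS0 _)
    intro k
    rw [abs_le]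
    have h1 := hx k
    have h2 := hy k
    constructor <;> linarith [h1.1, h1.2, h2.1, h2.2]
  have hcov : ∀ i, (sys p d).limitSet ⊆ ⋃ u, T i u := by
    intro i z hz
    obtain ⟨ω, x, hx, rfl⟩ := Set.mem_iUnion.1 (Set.mem_iInter.1 hz (N i + 1))
    change (j : Finset.Ico 0 (N i + 1)) → (Fin d → Fin (p.m j)) at ω
    refine Set.mem_iUnion.2 ⟨fun j => ω ⟨j, by
      have := Finset.mem_Ico.1 j.2
      exact Finset.mem_Ico.2 ⟨this.1, by omega⟩⟩, ?_⟩
    intro k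
    change wm p 0 (N i + 1) ω x k ∈ _
    rw [wm_apply]
    have hx' : x k ∈ Icc (0 : ℝ) 1 := hx k
    have e : ∀ u : (j : Finset.Ico 0 (N i)) → (Fin d → Fin (p.m j)),
        (∀ (j : ℕ) (h₁ : j ∈ Finset.Ico 0 (N i)) (h₂ : j ∈ Finset.Ico 0 (N i + 1)),
          u ⟨j, h₁⟩ = ω ⟨j, h₂⟩) →
        off p (ext p u k) 0 (N i) = off p (ext p ω k) 0 (N i) := by
      intro u hu
      refine off_congr p fun j hj => ?_
      have hj' : j ∈ Finset.Ico 0 (N i + 1) := by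
        rw [Finset.mem_Ico] at hj ⊢; omega
      rw [ext, ext, dif_pos hj, dif_pos hj', hu j hj hj']
    rw [e _ (fun j h₁ h₂ => rfl)]
    have h1 := off_step p (ext p ω k) (ext_lt p ω k) (Nat.zero_le (N i))
    have h2 := off_mono p (ext p ω k) (Nat.zero_le (N i)) (Nat.le_succ (N i))
    have h3 := pr_pos p 0 (N i + 1)
    simp only [hS]
    refine ⟨by nlinarith [hx'.1], by nlinarith [hx'.2]⟩
  have hr : Tendsto (fun i => ENNReal.ofReal (√d * S (N i))) atTop (𝓝 0) := by
    have := ENNReal.tendsto_ofReal (hSlim.const_mul (√d))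
    simpa using this
  have hm := Measure.hausdorffMeasure_le_liminf_sum t (sys p d).limitSet
    (l := atTop) (fun i => ENNReal.ofReal (√d * S (N i))) hr T
    (Eventually.of_forall hdiam) (Eventually.of_forall hcov)
  have hfin : μH[t] (sys p d).limitSet ≤ ENNReal.ofReal (√d ^ t * C) := by
    refine hm.trans ?_
    refine liminf_le_of_frequently_le' (Frequently.of_forall fun i => ?_)
    calc ∑ u, Metric.ediam (T i u) ^ t
        ≤ ∑ _u : ((j : Finset.Ico 0 (N i)) → (Fin d → Fin (p.m j))),
            ENNReal.ofReal ((√d * S (N i)) ^ t) := by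
          refine Finset.sum_le_sum fun u _ => ?_
          rw [← ENNReal.ofReal_rpow_of_nonneg
            (mul_nonneg (Real.sqrt_nonneg _) (hS0 _)) ht.le]
          exact ENNReal.rpow_le_rpow (hdiam i u) ht.le
      _ = ENNReal.ofReal ((PP p (N i) : ℝ) ^ d * (√d * S (N i)) ^ t) := by
          rw [Finset.sum_const, Finset.card_univ, card_word, nsmul_eq_mul,
            ENNReal.ofReal_mul (by positivity), ← Nat.cast_pow, ENNReal.ofReal_natCast]
      _ ≤ _ := by
          apply ENNReal.ofReal_le_ofReal
          rw [Real.mul_rpow (Real.sqrt_nonneg _) (hS0 _)]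
          have := mul_le_mul_of_nonneg_left (key i)
            (Real.rpow_nonneg (Real.sqrt_nonneg (d : ℝ)) t)
          simp only [hS]
          linarith
  have hfin' : μH[((t.toNNReal : NNReal) : ℝ)] (sys p d).limitSet ≠ ⊤ := by
    rw [Real.coe_toNNReal _ ht.le]
    exact ne_top_of_le_ne_top ENNReal.ofReal_ne_top hfin
  exact dimH_le_of_hausdorffMeasure_ne_top hfin'

/-! ### The concrete parameters -/

/-- least `k` with `n ≤ P q ^ k` -/
def kk (q P n : ℕ) : ℕ := sInf {k | n ≤ P * q ^ k}

def VV (q P n : ℕ) : ℕ := q ^ kk q P n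

def aa (q P n : ℕ) : ℕ := VV q P (n + 1) - VV q P n

lemma kk_spec {q P : ℕ} (hq : 2 ≤ q) (hP : 1 ≤ P)
    (n : ℕ) : n ≤ P * q ^ kk q P n := by
  have : ({k | n ≤ P * q ^ k} : Set ℕ).Nonempty := by
    refine ⟨n, ?_⟩
    have h1 : n < q ^ n := Nat.lt_pow_self (by omega)
    have h2 : q ^ n ≤ P * q ^ n := Nat.le_mul_of_pos_left _ (by omega)
    simp only [Set.mem_ofPred_eq]
    omega
  exact Nat.sInf_mem this

lemma kk_le {q P : ℕ} {n k : ℕ} (h : n ≤ P * q ^ k) : kk q P n ≤ k := Nat.sInf_le h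

lemma kk_mono {q P : ℕ} (hq : 2 ≤ q) (hP : 1 ≤ P)
    (n : ℕ) : kk q P n ≤ kk q P (n + 1) := by
  apply kk_le
  have := kk_spec hq hP (n + 1)
  omega

lemma kk_pow {q P : ℕ} (hq : 2 ≤ q) (hP : 1 ≤ P)
    (i : ℕ) : kk q P (P * q ^ i) = i := by
  apply le_antisymm (kk_le le_rfl)
  have h := kk_spec hq hP (P * q ^ i)
  have h2 : q ^ i ≤ q ^ kk q P (P * q ^ i) := Nat.le_of_mul_le_mul_left h (by omega)
  exact (Nat.pow_le_pow_iff_right (by omega)).1 h2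

lemma kk_pow_succ {q P : ℕ} (hq : 2 ≤ q) (hP : 1 ≤ P)
    (i : ℕ) : kk q P (P * q ^ i + 1) = i + 1 := by
  apply le_antisymm
  · apply kk_le
    have h1 : 1 ≤ q ^ i := Nat.one_le_pow _ _ (by omega)
    have h2 : 1 ≤ P * q ^ i := Nat.mul_pos hP h1
    have h3 : P * q ^ i * 2 ≤ P * q ^ i * q := Nat.mul_le_mul_left _ hq
    rw [pow_succ, ← mul_assoc]
    omega
  · have h := kk_spec hq hP (P * q ^ i + 1)
    have h2 : P * q ^ i < P * q ^ kk q P (P * q ^ i + 1) := h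
    have h3 := Nat.lt_of_mul_lt_mul_left h2
    exact (Nat.pow_lt_pow_iff_right (by omega)).1 h3

lemma VV_mono {q P : ℕ} (hq : 2 ≤ q) (hP : 1 ≤ P)
    (n : ℕ) : VV q P n ≤ VV q P (n + 1) :=
  Nat.pow_le_pow_right (by omega) (kk_mono hq hP n)

lemma VV_zero {q P : ℕ} (hq : 2 ≤ q) (hP : 1 ≤ P) : VV q P 0 = 1 := by
  have : kk q P 0 = 0 := by
    have := kk_le (q := q) (P := P) (n := 0) (k := 0) (by simp)
    omega
  simp [VV, this]

lemma aa_pos {q P : ℕ} (hq : 2 ≤ q) (hP : 1 ≤ P)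
    {n : ℕ} (h : aa q P n ≠ 0) : ∃ i, n = P * q ^ i := by
  refine ⟨kk q P n, ?_⟩
  have h1 := kk_spec hq hP n
  by_contra hne
  apply h
  have h2 : kk q P (n + 1) ≤ kk q P n := kk_le (by omega)
  have h3 := kk_mono hq hP n
  have : kk q P (n + 1) = kk q P n := le_antisymm h2 h3
  simp [aa, VV, this]

lemma aa_sum {q P : ℕ} (hq : 2 ≤ q) (hP : 1 ≤ P)
    (n : ℕ) : VV q P n = 1 + ∑ j ∈ Finset.range n, aa q P j := by
  induction n with
  | zero => simp [VV_zero hq hP]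
  | succ n ih =>
    rw [Finset.sum_range_succ, ← add_assoc, ← ih, aa]
    have := VV_mono hq hP n
    omega

lemma VV_pow {q P : ℕ} (hq : 2 ≤ q) (hP : 1 ≤ P)
    (i : ℕ) : VV q P (P * q ^ i) = q ^ i := by rw [VV, kk_pow hq hP]

lemma aa_pow {q P : ℕ} (hq : 2 ≤ q) (hP : 1 ≤ P)
    (i : ℕ) : (aa q P (P * q ^ i) : ℝ) = (q - 1) * (q : ℝ) ^ i := by
  rw [aa, Nat.cast_sub (VV_mono hq hP _), VV, VV, kk_pow hq hP, kk_pow_succ hq hP]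
  push_cast
  ring

def cpar (q P : ℕ) (δ β : ℝ) (hδ : 0 < δ) (hβ : 1 ≤ β) : Par where
  m := fun j => 2 ^ aa q P j
  c := fun j => (2 : ℝ) ^ (-(δ + β * (aa q P j : ℝ)))
  η := (2 : ℝ) ^ (-δ)
  hm := fun j => by positivity
  hc := fun j => by positivity
  hη := Real.rpow_lt_one_of_one_lt_of_neg (by norm_num) (by linarith)
  hη0 := by positivity
  hcm := fun j => by
    push_cast
    rw [← Real.rpow_natCast, ← Real.rpow_add (by norm_num)]
    apply Real.rpow_le_rpow_of_exponent_le (by norm_num)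
    have : (0 : ℝ) ≤ aa q P j := Nat.cast_nonneg _
    nlinarith

lemma sumaa {q P : ℕ} (hq : 2 ≤ q) (hP : 1 ≤ P)
    (n : ℕ) : (∑ j ∈ Finset.range n, (aa q P j : ℝ)) = VV q P n - 1 := by
  rw [aa_sum hq hP n]
  push_cast
  ring

lemma PP_eq {q P : ℕ} {δ β : ℝ} (hq : 2 ≤ q) (hP : 1 ≤ P) (hδ : 0 < δ) (hβ : 1 ≤ β)
    (n : ℕ) : (PP (cpar q P δ β hδ hβ) n : ℝ) = (2 : ℝ) ^ ((VV q P n : ℝ) - 1) := by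
  rw [← sumaa hq hP, ← Nat.cast_sum, Real.rpow_natCast, ← Finset.prod_pow_eq_pow_sum]
  simp [PP, cpar]

lemma pr_eq {q P : ℕ} {δ β : ℝ} (hq : 2 ≤ q) (hP : 1 ≤ P) (hδ : 0 < δ) (hβ : 1 ≤ β)
    (n : ℕ) : pr (cpar q P δ β hδ hβ) 0 n =
    (2 : ℝ) ^ (-(δ * n + β * ((VV q P n : ℝ) - 1))) := by
  rw [← sumaa hq hP]
  unfold pr
  rw [← Finset.range_eq_Ico]
  simp only [cpar]
  rw [← Real.rpow_sum_of_pos (by norm_num)]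
  congr 1
  rw [Finset.sum_neg_distrib, Finset.sum_add_distrib, Finset.mul_sum]
  simp [mul_comm]

lemma cm_eq {q P : ℕ} {δ β : ℝ} (hδ : 0 < δ) (hβ : 1 ≤ β)
    (n : ℕ) : (cpar q P δ β hδ hβ).c n * (cpar q P δ β hδ hβ).m n =
    (2 : ℝ) ^ (-(δ + (β - 1) * (aa q P n : ℝ))) := by
  simp only [cpar]
  push_cast
  rw [← Real.rpow_natCast, ← Real.rpow_add (by norm_num)]
  congr 1
  ring

lemma S_eq {q P : ℕ} {δ β : ℝ} (hq : 2 ≤ q) (hP : 1 ≤ P) (hδ : 0 < δ) (hβ : 1 ≤ β)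
    {D : ℝ} (hD : δ * P + β + (β - 1) * (q - 1) = D) (i : ℕ) :
    pr (cpar q P δ β hδ hβ) 0 (P * q ^ i) *
      ((cpar q P δ β hδ hβ).c (P * q ^ i) * (cpar q P δ β hδ hβ).m (P * q ^ i)) =
    (2 : ℝ) ^ (-(D * (q : ℝ) ^ i + δ - β)) := by
  rw [pr_eq hq hP, cm_eq, aa_pow hq hP, VV_pow hq hP, ← Real.rpow_add (by norm_num)]
  congr 1
  rw [← hD]
  push_cast
  ring

lemma N_tendsto {q P : ℕ} (hP : 1 ≤ P) (hq : 2 ≤ q) :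
    Tendsto (fun i => P * q ^ i) atTop atTop := by
  refine tendsto_atTop_mono (fun i => ?_) tendsto_id
  have h1 : i < q ^ i := Nat.lt_pow_self (by omega)
  have h2 : q ^ i ≤ P * q ^ i := Nat.le_mul_of_pos_left _ (by omega)
  simp only [id]
  omega

lemma dim_eq {q P : ℕ} {δ β : ℝ} (hq : 2 ≤ q) (hP : 1 ≤ P) (hδ : 0 < δ) (hβ : 1 ≤ β)
    {d : ℕ} {t₁ : ℝ} (hd : 0 < d) (h1 : 0 < t₁) (h1d : t₁ ≤ d)
    (hD : δ * P + β + (β - 1) * (q - 1) = d / t₁) :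
    dimH (sys (cpar q P δ β hδ hβ) d).limitSet = ENNReal.ofReal t₁ := by
  have hd' : (0 : ℝ) < d := by exact_mod_cast hd
  apply le_antisymm
  · refine dim_upper _ (C := (2 : ℝ) ^ (-(d : ℝ) - t₁ * (δ - β))) h1 (fun i => P * q ^ i)
      (N_tendsto hP hq) fun i => ?_
    rw [S_eq hq hP hδ hβ hD, PP_eq hq hP, VV_pow hq hP, ← Real.rpow_natCast,
      ← Real.rpow_mul (by norm_num), ← Real.rpow_mul (by norm_num),
      ← Real.rpow_add (by norm_num)]
    apply le_of_eq
    congr 1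
    push_cast
    field_simp
    ring
  · have hα : 0 < t₁ / d := by positivity
    have := dim_lower (cpar q P δ β hδ hβ) hd (α := t₁ / d)
      (C := (2 : ℝ) ^ (1 + t₁ / d * (δ - β))) ?_ hα (by rw [div_le_one hd']; exact h1d)
      (by positivity) ?_
    · rwa [div_mul_cancel₀ _ hd'.ne'] at this
    · intro x
      obtain ⟨i, hi⟩ := exists_nat_gt x
      refine ⟨P * q ^ i, ?_⟩
      rw [PP_eq hq hP, VV_pow hq hP]
      have h2 : i + 1 ≤ q ^ i := Nat.lt_pow_self (by omega)
      have h3 : (i : ℝ) ≤ ((q ^ i : ℕ) : ℝ) - 1 := by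
        have : ((i + 1 : ℕ) : ℝ) ≤ ((q ^ i : ℕ) : ℝ) := by exact_mod_cast h2
        push_cast at this ⊢
        linarith
      have h4 : (i : ℝ) < (2 : ℝ) ^ (i : ℝ) := by
        rw [Real.rpow_natCast]
        exact_mod_cast Nat.lt_two_pow_self
      exact hi.trans (h4.trans_le (Real.rpow_le_rpow_of_exponent_le (by norm_num) h3))
    · intro j hj
      have : aa q P j ≠ 0 := by
        intro h
        simp [cpar, h] at hj
      obtain ⟨i, rfl⟩ := aa_pos hq hP this
      rw [S_eq hq hP hδ hβ hD, PP_eq hq hP, VV_pow hq hP, ← Real.rpow_mul (by norm_num),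
        ← Real.rpow_add (by norm_num), one_div, ← Real.rpow_neg (by norm_num)]
      apply le_of_eq
      congr 1
      push_cast
      field_simp
      ring

lemma logZ_eq {q P : ℕ} {δ β : ℝ} (hq : 2 ≤ q) (hP : 1 ≤ P) (hδ : 0 < δ) (hβ : 1 ≤ β)
    (d n : ℕ) (t : ℝ) : ((sys (cpar q P δ β hδ hβ) d).Z n t).log *
      (((n : ℝ)⁻¹ : ℝ) : EReal) =
    (((d * ((VV q P n : ℝ) - 1) - t * (δ * n + β * ((VV q P n : ℝ) - 1))) * Real.log 2 *
      (n : ℝ)⁻¹ : ℝ) : EReal) := by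
  rw [Z_eq, PP_eq hq hP, pr_eq hq hP, ← Real.rpow_natCast, ← Real.rpow_mul (by norm_num),
      ← Real.rpow_mul (by norm_num), ← Real.rpow_add (by norm_num), ENNReal.log_ofReal,
      if_neg (not_le.2 (by positivity)), Real.log_rpow (by norm_num), ← EReal.coe_mul]
  congr 3
  ring

lemma B_eq {q P : ℕ} {δ β : ℝ} (hq : 2 ≤ q) (hP : 1 ≤ P) (hδ : 0 < δ) (hβ : 1 ≤ β)
    {d : ℕ} {t₂ : ℝ} (h2 : 0 < t₂) (hD : δ * P + β = d / t₂) :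
    (sys (cpar q P δ β hδ hβ) d).Bdim = ENNReal.ofReal t₂ := by
  have hP' : (0 : ℝ) < P := by exact_mod_cast hP
  have hlog : 0 < Real.log 2 := Real.log_pos (by norm_num)
  have hD' : t₂ * (δ * P + β) = d := by rw [hD]; field_simp
  have hd : (0 : ℝ) < d := by
    rw [← hD']; positivity
  apply le_antisymm
  · refine iSup_le ?_
    rintro ⟨t, ht0, ht⟩
    apply ENNReal.ofReal_le_ofReal
    by_contra! hlt
    refine absurd ht (not_lt.2 ?_)
    refine liminf_le_of_frequently_le' ?_
    refine (N_tendsto hP hq).frequently (Eventually.frequently ?_)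
    obtain ⟨M, hM⟩ := exists_nat_gt ((t * β - d) / (t * (δ * P + β) - d))
    filter_upwards [eventually_ge_atTop M] with i hi
    rw [logZ_eq hq hP hδ hβ]
    rw [← EReal.coe_zero, EReal.coe_le_coe_iff, VV_pow hq hP]
    apply mul_nonpos_of_nonpos_of_nonneg _ (by positivity)
    apply mul_nonpos_of_nonpos_of_nonneg _ hlog.le
    have hpos : 0 < t * (δ * P + β) - d := by
      rw [← hD']
      have : 0 < δ * P + β := by positivity
      nlinarith
    rw [div_lt_iff₀ hpos] at hM
    have hq1 : i < q ^ i := Nat.lt_pow_self (by omega)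
    have hq2 : (M : ℝ) ≤ ((q ^ i : ℕ) : ℝ) := by exact_mod_cast (by omega)
    have := mul_le_mul_of_nonneg_right hq2 hpos.le
    push_cast at this ⊢
    nlinarith
  · refine le_of_forall_lt_imp_le_of_dense fun x hx => ?_
    have hxt : x ≠ ⊤ := ne_top_of_lt hx
    have hx2 : x.toReal < t₂ := by
      rw [ENNReal.lt_ofReal_iff_toReal_lt hxt] at hx
      exact hx
    set t := x.toReal with htdef
    have ht0 : 0 ≤ t := ENNReal.toReal_nonneg
    have hpos : (0 : EReal) < (sys (cpar q P δ β hδ hβ) d).lowP t := by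
      set s : ℝ := (d - t * (δ * P + β)) / P with hs
      have hbp : 0 < δ * P + β := by positivity
      have hs0 : 0 < s := by
        apply div_pos _ hP'
        rw [← hD']
        nlinarith
      have hb0 : 0 ≤ d - t * β := by
        rw [← hD']
        have : t * (δ * P + β) ≤ t₂ * (δ * P + β) := by nlinarith
        have : 0 ≤ t * (δ * P) := by positivity
        nlinarith
      have hc : (0 : EReal) < ((s / 2 * Real.log 2 : ℝ) : EReal) := by
        rw [← EReal.coe_zero, EReal.coe_lt_coe_iff]; positivity
      refine hc.trans_le ?_
      unfold NCIFS.lowP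
      refine le_liminf_of_le (by isBoundedDefault) ?_
      obtain ⟨M, hM⟩ := exists_nat_gt ((d - t * β) / (s / 2))
      filter_upwards [eventually_ge_atTop M, eventually_gt_atTop 0] with n hn hn0
      rw [logZ_eq hq hP hδ hβ, EReal.coe_le_coe_iff]
      have hn' : (0 : ℝ) < n := by exact_mod_cast hn0
      rw [← div_eq_mul_inv, le_div_iff₀ hn', mul_right_comm]
      apply mul_le_mul_of_nonneg_right _ hlog.le
      rw [div_lt_iff₀ (by positivity)] at hM
      have hMn : (M : ℝ) * (s / 2) ≤ n * (s / 2) := by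
        apply mul_le_mul_of_nonneg_right _ (by positivity)
        exact_mod_cast hn
      have hV : (n : ℝ) / P ≤ VV q P n := by
        rw [div_le_iff₀ hP', mul_comm]
        exact_mod_cast kk_spec hq hP n
      have hV2 := mul_le_mul_of_nonneg_left hV hb0
      have hsn : s * n = (d - t * β) * (n / P) - t * δ * n := by
        rw [hs]; field_simp; ring
      nlinarith
    calc x = ENNReal.ofReal t := (ENNReal.ofReal_toReal hxt).symm
      _ ≤ _ := le_iSup (fun t : {t : ℝ // 0 ≤ t ∧
          (0 : EReal) < (sys (cpar q P δ β hδ hβ) d).lowP t} => ENNReal.ofReal t.1)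
          ⟨t, ht0, hpos⟩

lemma growth {q P : ℕ} {δ β : ℝ} (hq : 2 ≤ q) (hP : 1 ≤ P) (hδ : 0 < δ) (hβ : 1 ≤ β)
    {d : ℕ} {ε : ℝ} (hε : 0 < ε) (h : d * (q - 1) * Real.log 2 / P ≤ ε) :
    limsup (fun n : ℕ => Real.log (Nat.card ((sys (cpar q P δ β hδ hβ) d).I n)) / n) atTop
      ≤ ε := by
  have hP' : (0 : ℝ) < P := by exact_mod_cast hP
  have hcard : ∀ n, Real.log (Nat.card ((sys (cpar q P δ β hδ hβ) d).I n)) =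
      d * (aa q P n * Real.log 2) := by
    intro n
    have : Nat.card ((sys (cpar q P δ β hδ hβ) d).I n) = (2 ^ aa q P n) ^ d := by
      change Nat.card (Fin d → Fin (2 ^ aa q P n)) = _
      simp
    rw [this]
    push_cast
    rw [Real.log_pow, Real.log_pow]
  simp only [hcard]
  have hlog : 0 < Real.log 2 := Real.log_pos (by norm_num)
  refine limsup_le_of_le ?_ (Eventually.of_forall fun n => ?_)
  · refine IsBoundedUnder.isCoboundedUnder_le ⟨0, ?_⟩
    rw [eventually_map]
    exact Eventually.of_forall fun n => by positivity
  · by_cases ha : aa q P n = 0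
    · simp [ha, hε.le]
    · obtain ⟨i, rfl⟩ := aa_pos hq hP ha
      refine le_trans (le_of_eq ?_) h
      rw [aa_pow hq hP]
      have : (q : ℝ) ≠ 0 := by
        have : q ≠ 0 := by omega
        exact_mod_cast this
      push_cast
      field_simp


end NCIFSaux

/-- (Counterexamples to Bowen's formula.) For every `0 < t₁ < t₂ < d` and
`ε > 0` there exists a perfectly balanced finite NCIFS `Φ` in `ℝ^d` (all maps at each level are
affine similarities with the same contraction ratio, and there is no distortion: `K = 1`) with
`limsup (1/n) log #I^{(n)} ≤ ε`, such that `HD(J(Φ)) = t₁` while `B(Φ) = t₂`. -/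
theorem NCIFS.exists_counterexample (d : ℕ) (t₁ t₂ ε : ℝ)
    (h₀ : 0 < t₁) (h₁ : t₁ < t₂) (h₂ : t₂ < d) (hε : 0 < ε) :
    ∃ Φ : NCIFS d, (∀ n, Finite (Φ.I n)) ∧ Φ.K = 1 ∧
      (∀ n (a b : Φ.I n), Φ.Dnorm n a = Φ.Dnorm n b) ∧
      (∀ n (i : Φ.I n), ∀ x ∈ Φ.X, ∀ y ∈ Φ.X,
        dist (Φ.wMap n (n+1) (Φ.single n i) x) (Φ.wMap n (n+1) (Φ.single n i) y) =
          Φ.Dnorm n i * dist x y) ∧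
      limsup (fun n : ℕ => Real.log (Nat.card (Φ.I n)) / n) atTop ≤ ε ∧
      dimH Φ.limitSet = ENNReal.ofReal t₁ ∧
      Φ.Bdim = ENNReal.ofReal t₂ := by
  have h02 : 0 < t₂ := h₀.trans h₁
  have hd' : (0 : ℝ) < d := h02.trans h₂
  have hd : 0 < d := by exact_mod_cast hd'
  set x : ℝ := d / t₁ - d / t₂ with hx
  set y : ℝ := d / t₂ - 1 with hy
  have hx0 : 0 < x := sub_pos.2 (div_lt_div_of_pos_left hd' h₀ h₁)
  have hy0 : 0 < y := by rw [hy, sub_pos, lt_div_iff₀ h02]; linarith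
  obtain ⟨n, hn⟩ := exists_nat_gt (x / y)
  obtain ⟨P₀, hP₀⟩ := exists_nat_gt ((d * (n + 1) * Real.log 2) / ε)
  set P := P₀ + 1 with hPdef
  have hP : 1 ≤ P := by omega
  have hP' : (0 : ℝ) < P := by exact_mod_cast hP
  have hn1 : (0 : ℝ) < (n : ℝ) + 1 := by positivity
  have hq : 2 ≤ n + 2 := by omega
  have hqc : (((n + 2 : ℕ) : ℝ) - 1) = n + 1 := by push_cast; ring
  set β : ℝ := 1 + x / (n + 1) with hβdef
  have hβ : 1 ≤ β := by
    have : 0 < x / (n + 1) := div_pos hx0 hn1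
    linarith
  set δ : ℝ := (d / t₂ - β) / P with hδdef
  have hδ : 0 < δ := by
    apply div_pos _ hP'
    have : x / (n + 1) < y := by
      rw [div_lt_iff₀ hn1]
      rw [div_lt_iff₀ hy0] at hn
      nlinarith
    linarith
  have hB : δ * P + β = d / t₂ := by
    rw [hδdef]; field_simp; ring
  have hD : δ * P + β + (β - 1) * (((n + 2 : ℕ) : ℝ) - 1) = d / t₁ := by
    rw [hB, hqc, hβdef, add_sub_cancel_left, div_mul_cancel₀ _ hn1.ne', hx]
    ring
  refine ⟨NCIFSaux.sys (NCIFSaux.cpar (n + 2) P δ β hδ hβ) d, ?_, rfl, ?_, ?_, ?_, ?_, ?_⟩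
  · intro k
    exact inferInstanceAs (Finite (Fin d → Fin _))
  · intro k a b
    rfl
  · intro k i x _ y _
    exact NCIFSaux.wm_dist _ _ _ _ x y
  · refine NCIFSaux.growth hq hP hδ hβ hε ?_
    rw [hqc, div_le_iff₀ hP']
    rw [div_lt_iff₀ hε] at hP₀
    have : (P : ℝ) = P₀ + 1 := by rw [hPdef]; push_cast; ring
    rw [this]
    nlinarith
  · exact NCIFSaux.dim_eq hq hP hδ hβ hd h₀ (h₁.trans h₂).le hD
  · exact NCIFSaux.B_eq hq hP hδ hβ h02 hB
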